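/- (Differentiability of the multi-risk solution in the weight vector.) Let F₁, …, F₅ be distribution functions of probability measures on [0,∞) vanishing at 0, with compounding operators Ψⱼ = Ψ_{Fⱼ}, and let g : [0,∞) → ℝ be measurable and locally bounded. For γ ∈ ℝ⁵ write ⟨γ,Ψ⟩h = Σ_{j=1}^5 γⱼ Ψⱼ h. Then for each x ≥ 0 the series u_{γ,g}(x) = Σ_{n=0}^∞ (⟨γ,Ψ⟩ⁿ g)(x) converges, γ ↦ u_{γ,g}(x) is differentiable on ℝ⁵ (indeed analytic), and ∂u_{γ,g}(x)/∂γⱼ = u_{γ, Ψⱼ u_{γ,g}}(x) for j = 1,…,5. -/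

import Mathlib

open MeasureTheory Set Filter

/-- The compounding operator `Ψ_F` associated with the probability measure `μ` on `[0,∞)`
(whose distribution function is `F`, so that `F(0) = 0` reads `μ (Iic 0) = 0`):
`(Ψ_F h)(x) = ∫₀ˣ (h(z) - ∫₀ᶻ h(z-y) dF(y)) dz`,
the inner integral being the Lebesgue–Stieltjes integral with respect to `F`. -/
noncomputable def Psi (μ : Measure ℝ) (h : ℝ → ℝ) : ℝ → ℝ :=
  fun x => ∫ z in (0:ℝ)..x, (h z - ∫ y in Icc (0:ℝ) z, h (z - y) ∂μ)

/-- `h : [0,∞) → ℝ` is locally bounded. -/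
def LocBdd (h : ℝ → ℝ) : Prop :=
  ∀ x : ℝ, ∃ M : ℝ, ∀ z ∈ Icc (0:ℝ) x, |h z| ≤ M

/-- `‖h‖_{[0,x]} = sup_{z ∈ [0,x]} |h z|`. -/
noncomputable def supNorm (h : ℝ → ℝ) (x : ℝ) : ℝ :=
  sSup ((fun z => |h z|) '' Icc (0:ℝ) x)

/-- The combined operator `⟨γ,Ψ⟩ h = Σ_{j=1}^5 γⱼ Ψⱼ h`. -/
noncomputable def PsiVec (μ : Fin 5 → Measure ℝ) (γ : Fin 5 → ℝ) (h : ℝ → ℝ) : ℝ → ℝ :=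
  fun x => ∑ j, γ j * Psi (μ j) h x

/-- `u_{γ,g}(x) = Σ_{n=0}^∞ (⟨γ,Ψ⟩ⁿ g)(x)`. -/
noncomputable def uSol (μ : Fin 5 → Measure ℝ) (γ : Fin 5 → ℝ) (g : ℝ → ℝ) : ℝ → ℝ :=
  fun x => ∑' n : ℕ, ((PsiVec μ γ)^[n] g) x

/-!
On the Banach space of bounded measurable functions on `[0, X]`, the operator `T γ = ⟨γ,Ψ⟩` is
bounded, and linear in `γ`. It is of Volterra type, so `‖(T γ)ⁿ‖ ≤ (r X)ⁿ / n!` and the Neumann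
series converges to the inverse of `1 - T γ`. Hence `u_{γ,g}` is the resolvent
`R γ = (1 - T γ)⁻¹` applied to `g`. Inversion in a Banach algebra is analytic, so `R` is analytic,
with derivative `R γ * T v * R γ` in the direction `v`; applied to `g`, this is the Neumann series
started from `⟨v,Ψ⟩ u_{γ,g}`.
-/

open scoped ENNReal Nat

section Resolvent

theorem isUnit_one_sub_of_summable_pow {A : Type*} [Ring A] [TopologicalSpace A]
    [IsTopologicalRing A] [T2Space A] {a : A} (ha : Summable (a ^ ·)) : IsUnit (1 - a) :=
  isUnit_iff_exists.2 ⟨_, ha.one_sub_mul_tsum_pow, ha.tsum_pow_mul_one_sub⟩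

theorem ringInverse_one_sub_eq_tsum_pow {A : Type*} [Ring A] [TopologicalSpace A]
    [IsTopologicalRing A] [T2Space A] {a : A} (ha : Summable (a ^ ·)) :
    Ring.inverse (1 - a) = ∑' n : ℕ, a ^ n :=
  Ring.inverse_unit ⟨1 - a, ∑' n : ℕ, a ^ n, ha.one_sub_mul_tsum_pow, ha.tsum_pow_mul_one_sub⟩

variable {𝕜 V A : Type*} [NontriviallyNormedField 𝕜] [NormedAddCommGroup V] [NormedSpace 𝕜 V]
  [NormedRing A] [NormedAlgebra 𝕜 A] [CompleteSpace A] {L : V →L[𝕜] A} {v : V}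

theorem analyticAt_ringInverse_one_sub (hv : IsUnit (1 - L v)) :
    AnalyticAt 𝕜 (fun w => Ring.inverse (1 - L w)) v := by
  obtain ⟨a, ha⟩ := hv
  have hinv : AnalyticAt 𝕜 Ring.inverse (1 - L v) := ha ▸ analyticAt_inverse a
  have hsub : AnalyticAt 𝕜 (fun w => 1 - L w) v := analyticAt_const.sub (L.analyticAt v)
  exact hinv.fun_comp (f := fun w => 1 - L w) hsub

theorem fderiv_ringInverse_one_sub_apply (hv : IsUnit (1 - L v)) (w : V) :
    fderiv 𝕜 (fun w' => Ring.inverse (1 - L w')) v w =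
      Ring.inverse (1 - L v) * L w * Ring.inverse (1 - L v) := by
  obtain ⟨a, ha⟩ := hv
  have hinv := hasFDerivAt_ringInverse (𝕜 := 𝕜) a
  rw [← Ring.inverse_unit a, ha] at hinv
  have hsub : HasFDerivAt (fun w' => 1 - L w') (-L) v := L.hasFDerivAt.const_sub 1
  refine (DFunLike.congr_fun (hinv.comp v hsub).fderiv w).trans ?_
  simp

end Resolvent

theorem stronglyMeasurable_setIntegral_preimage_prodMk {α β E : Type*} [MeasurableSpace α]
    [MeasurableSpace β] [NormedAddCommGroup E] [NormedSpace ℝ E] {ν : Measure β} [SFinite ν]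
    {F : α × β → E} (hF : StronglyMeasurable F) {s : Set (α × β)} (hs : MeasurableSet s) :
    StronglyMeasurable fun a => ∫ b in Prod.mk a ⁻¹' s, F (a, b) ∂ν := by
  simp_rw [← integral_indicator (measurable_prodMk_left hs)]
  exact (hF.indicator hs).integral_prod_right'

section Psi

variable {μ : Measure ℝ} {h h' : ℝ → ℝ}

/-- The integrand `h(z) - ∫₀ᶻ h(z-y) dF(y)` of the compounding operator `Ψ_F`. -/
noncomputable def psiIntegrand (μ : Measure ℝ) (h : ℝ → ℝ) (z : ℝ) : ℝ :=
  h z - ∫ y in Icc (0 : ℝ) z, h (z - y) ∂μ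

theorem measurable_psiIntegrand [SFinite μ] (hh : Measurable h) :
    Measurable (psiIntegrand μ h) := by
  have hs : MeasurableSet {p : ℝ × ℝ | 0 ≤ p.2 ∧ p.2 ≤ p.1} := by measurability
  have hF : Measurable fun p : ℝ × ℝ => h (p.1 - p.2) := by fun_prop
  exact hh.sub (stronglyMeasurable_setIntegral_preimage_prodMk hF.stronglyMeasurable hs).measurable

theorem measurable_Psi [SFinite μ] (hh : Measurable h) : Measurable (Psi μ h) := by
  have hF : StronglyMeasurable fun p : ℝ × ℝ => psiIntegrand μ h p.2 :=
    ((measurable_psiIntegrand hh).comp measurable_snd).stronglyMeasurable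
  have hpos : MeasurableSet {p : ℝ × ℝ | 0 < p.2 ∧ p.2 ≤ p.1} := by measurability
  have hneg : MeasurableSet {p : ℝ × ℝ | p.1 < p.2 ∧ p.2 ≤ 0} := by measurability
  exact (stronglyMeasurable_setIntegral_preimage_prodMk hF hpos).measurable.sub
    (stronglyMeasurable_setIntegral_preimage_prodMk hF hneg).measurable

theorem psiIntegrand_congr {z : ℝ} (hz : 0 ≤ z) (hh : EqOn h h' (Icc 0 z)) :
    psiIntegrand μ h z = psiIntegrand μ h' z :=
  congrArg₂ (· - ·) (hh ⟨hz, le_rfl⟩) <| setIntegral_congr_fun measurableSet_Icc fun y hy =>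
    hh ⟨by linarith [hy.2], by linarith [hy.1]⟩

theorem Psi_congr {X : ℝ} (hh : EqOn h h' (Icc 0 X)) : EqOn (Psi μ h) (Psi μ h') (Icc 0 X) := by
  intro x hx
  refine intervalIntegral.integral_congr fun z hz => ?_
  rw [uIcc_of_le hx.1] at hz
  exact psiIntegrand_congr hz.1 (hh.mono (Icc_subset_Icc_right (hz.2.trans hx.2)))

theorem psiIntegrand_smul (c z : ℝ) : psiIntegrand μ (c • h) z = c * psiIntegrand μ h z := by
  simp only [psiIntegrand, Pi.smul_apply, smul_eq_mul, integral_const_mul, mul_sub]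

theorem Psi_smul (c x : ℝ) : Psi μ (c • h) x = c * Psi μ h x :=
  (intervalIntegral.integral_congr fun z _ => psiIntegrand_smul c z).trans
    (intervalIntegral.integral_const_mul ..)

variable [IsFiniteMeasure μ]

theorem abs_psiIntegrand_le {z b : ℝ} (hz : 0 ≤ z) (hb : ∀ w ∈ Icc 0 z, |h w| ≤ b) :
    |psiIntegrand μ h z| ≤ (1 + μ.real univ) * b := by
  have hhz : |h z| ≤ b := hb z ⟨hz, le_rfl⟩
  have hb0 : 0 ≤ b := (abs_nonneg _).trans hhz
  have hint : |∫ y in Icc (0 : ℝ) z, h (z - y) ∂μ| ≤ b * μ.real (Icc 0 z) := by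
    rw [← Real.norm_eq_abs]
    exact norm_setIntegral_le_of_norm_le_const (measure_lt_top _ _) fun y hy =>
      hb _ ⟨by linarith [hy.2], by linarith [hy.1]⟩
  calc |psiIntegrand μ h z|
      ≤ |h z| + |∫ y in Icc (0 : ℝ) z, h (z - y) ∂μ| := abs_sub _ _
    _ ≤ b + b * μ.real univ := by
      gcongr
      exact hint.trans (mul_le_mul_of_nonneg_left (measureReal_mono (subset_univ _)) hb0)
    _ = (1 + μ.real univ) * b := by ring

theorem intervalIntegrable_psiIntegrand (hm : Measurable h) (hb : LocBdd h) {x : ℝ}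
    (hx : 0 ≤ x) : IntervalIntegrable (psiIntegrand μ h) volume 0 x := by
  obtain ⟨M, hM⟩ := hb x
  refine (intervalIntegrable_const (c := (1 + μ.real univ) * M)).mono_fun'
    (measurable_psiIntegrand hm).aestronglyMeasurable ?_
  rw [uIoc_of_le hx]
  exact ae_restrict_of_forall_mem measurableSet_Ioc fun z hz =>
    abs_psiIntegrand_le hz.1.le fun w hw => hM w ⟨hw.1, hw.2.trans hz.2⟩

theorem psiIntegrand_add (hm : Measurable h) (hb : LocBdd h) (hm' : Measurable h')
    (hb' : LocBdd h') (z : ℝ) :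
    psiIntegrand μ (h + h') z = psiIntegrand μ h z + psiIntegrand μ h' z := by
  have hint {f : ℝ → ℝ} (hf : Measurable f) (hfb : LocBdd f) :
      IntegrableOn (fun y => f (z - y)) (Icc 0 z) μ := by
    obtain ⟨M, hM⟩ := hfb z
    refine .of_bound (measure_lt_top _ _) (hf.comp (by fun_prop)).aestronglyMeasurable M ?_
    exact ae_restrict_of_forall_mem measurableSet_Icc fun y hy =>
      hM _ ⟨by linarith [hy.2], by linarith [hy.1]⟩
  simp only [psiIntegrand, Pi.add_apply]
  rw [integral_add (hint hm hb) (hint hm' hb')]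
  ring

theorem Psi_add (hm : Measurable h) (hb : LocBdd h) (hm' : Measurable h') (hb' : LocBdd h')
    {x : ℝ} (hx : 0 ≤ x) : Psi μ (h + h') x = Psi μ h x + Psi μ h' x :=
  (intervalIntegral.integral_congr fun z _ => psiIntegrand_add hm hb hm' hb' z).trans <|
    intervalIntegral.integral_add (intervalIntegrable_psiIntegrand hm hb hx)
      (intervalIntegrable_psiIntegrand hm' hb' hx)

theorem abs_Psi_le_of_abs_le_pow {x c : ℝ} {n : ℕ} (hx : 0 ≤ x) (hc : 0 ≤ c)
    (hh : ∀ w ∈ Icc 0 x, |h w| ≤ c * w ^ n) :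
    |Psi μ h x| ≤ (1 + μ.real univ) * c * (x ^ (n + 1) / (n + 1)) := by
  have hbound : ∀ᵐ z, z ∈ Ioc 0 x → ‖psiIntegrand μ h z‖ ≤ (1 + μ.real univ) * c * z ^ n := by
    refine .of_forall fun z hz => ?_
    rw [mul_assoc]
    refine abs_psiIntegrand_le hz.1.le fun w hw => (hh w ⟨hw.1, hw.2.trans hz.2⟩).trans ?_
    gcongr
    exacts [hw.1, hw.2]
  calc |Psi μ h x|
      ≤ ∫ z in (0 : ℝ)..x, (1 + μ.real univ) * c * z ^ n :=
        intervalIntegral.norm_integral_le_of_norm_le hx hbound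
          (Continuous.intervalIntegrable (by fun_prop) _ _)
    _ = (1 + μ.real univ) * c * (x ^ (n + 1) / (n + 1)) := by
      simp [intervalIntegral.integral_const_mul, integral_pow]

end Psi

section WeightedPsi

variable {ι : Type*} [Fintype ι] {μ : ι → Measure ℝ} {γ : ι → ℝ} {h h' : ℝ → ℝ}

/-- The combined operator `⟨γ,Ψ⟩ h = Σⱼ γⱼ Ψⱼ h` of an arbitrary finite family of risks; `PsiVec` is
the case of five risks. -/
noncomputable def weightedPsi (μ : ι → Measure ℝ) (γ : ι → ℝ) (h : ℝ → ℝ) : ℝ → ℝ :=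
  fun x => ∑ j, γ j * Psi (μ j) h x

/-- The Neumann series `u_{γ,h} = Σₙ ⟨γ,Ψ⟩ⁿ h` of an arbitrary finite family of risks; `uSol` is the
case of five risks. -/
noncomputable def weightedSol (μ : ι → Measure ℝ) (γ : ι → ℝ) (h : ℝ → ℝ) : ℝ → ℝ :=
  fun x => ∑' n : ℕ, ((weightedPsi μ γ)^[n] h) x

/-- The growth rate `r = Σⱼ |γⱼ| (1 + μⱼ(ℝ))` in the Volterra estimate
`|⟨γ,Ψ⟩ⁿ h (x)| ≤ ‖h‖ (r x)ⁿ / n!`. -/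
noncomputable def volterraRate (μ : ι → Measure ℝ) (γ : ι → ℝ) : ℝ :=
  ∑ j, |γ j| * (1 + (μ j).real univ)

theorem volterraRate_nonneg : 0 ≤ volterraRate μ γ := by
  unfold volterraRate
  positivity

theorem weightedPsi_single [DecidableEq ι] (j : ι) :
    weightedPsi μ (Pi.single j 1) h = Psi (μ j) h := by
  ext x
  simp [weightedPsi, Pi.single_apply]

theorem weightedPsi_congr {X : ℝ} (hh : EqOn h h' (Icc 0 X)) :
    EqOn (weightedPsi μ γ h) (weightedPsi μ γ h') (Icc 0 X) := fun _ hx =>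
  Finset.sum_congr rfl fun _ _ => by rw [Psi_congr hh hx]

variable [∀ j, IsFiniteMeasure (μ j)]

theorem abs_weightedPsi_le_of_abs_le_pow {x c : ℝ} {n : ℕ} (hx : 0 ≤ x) (hc : 0 ≤ c)
    (hh : ∀ w ∈ Icc 0 x, |h w| ≤ c * w ^ n) :
    |weightedPsi μ γ h x| ≤ volterraRate μ γ * c * (x ^ (n + 1) / (n + 1)) := by
  calc |weightedPsi μ γ h x|
      ≤ ∑ j, |γ j * Psi (μ j) h x| := Finset.abs_sum_le_sum_abs _ _
    _ ≤ ∑ j, |γ j| * ((1 + (μ j).real univ) * c * (x ^ (n + 1) / (n + 1))) := by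
      simp_rw [abs_mul]
      gcongr
      exact abs_Psi_le_of_abs_le_pow hx hc hh
    _ = volterraRate μ γ * c * (x ^ (n + 1) / (n + 1)) := by
      simp only [volterraRate, Finset.sum_mul, mul_assoc]

theorem abs_iterate_weightedPsi_le {X c : ℝ} (hc : 0 ≤ c) (hh : ∀ w ∈ Icc 0 X, |h w| ≤ c)
    (n : ℕ) : ∀ x ∈ Icc 0 X,
      |(weightedPsi μ γ)^[n] h x| ≤ c * volterraRate μ γ ^ n / n ! * x ^ n := by
  induction n with
  | zero => simpa using hh
  | succ n ih =>
    intro x hx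
    have hcn : 0 ≤ c * volterraRate μ γ ^ n / n ! := by
      have := volterraRate_nonneg (μ := μ) (γ := γ)
      positivity
    rw [Function.iterate_succ_apply']
    refine (abs_weightedPsi_le_of_abs_le_pow hx.1 hcn fun w hw =>
      ih w ⟨hw.1, hw.2.trans hx.2⟩).trans_eq ?_
    rw [Nat.factorial_succ]
    push_cast
    field_simp
    ring

end WeightedPsi

/-- The bounded measurable functions on `α`, as a subspace of `ℓ^∞(α)`. They are not identified
almost everywhere, so that evaluation at a point is a continuous functional. -/
def boundedMeasurableSubmodule (α : Type*) [MeasurableSpace α] :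
    Submodule ℝ (lp (fun _ : α => ℝ) ∞) where
  carrier := {f | Measurable (f : α → ℝ)}
  add_mem' hf hg := Measurable.add hf hg
  zero_mem' := measurable_zero
  smul_mem' c _ hf := Measurable.const_smul hf c

theorem isClosed_boundedMeasurableSubmodule {α : Type*} [MeasurableSpace α] :
    IsClosed (boundedMeasurableSubmodule α : Set (lp (fun _ : α => ℝ) ∞)) :=
  IsSeqClosed.isClosed fun _ f hu huf => measurable_of_tendsto_metrizable hu <|
    tendsto_pi_nhds.2 fun x => ((lp.evalCLM ℝ (fun _ : α => ℝ) ∞ x).continuous.tendsto f).comp huf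

/-- The Banach space of bounded measurable functions on `α` with the supremum norm. -/
def BoundedMeasurable (α : Type*) [MeasurableSpace α] : Type _ := boundedMeasurableSubmodule α

namespace BoundedMeasurable

variable {α : Type*} [MeasurableSpace α]

noncomputable instance : NormedAddCommGroup (BoundedMeasurable α) :=
  inferInstanceAs (NormedAddCommGroup (boundedMeasurableSubmodule α))

noncomputable instance : NormedSpace ℝ (BoundedMeasurable α) :=
  inferInstanceAs (NormedSpace ℝ (boundedMeasurableSubmodule α))

instance : CompleteSpace (BoundedMeasurable α) :=
  isClosed_boundedMeasurableSubmodule.completeSpace_coe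

instance : CoeFun (BoundedMeasurable α) fun _ => α → ℝ := ⟨fun f => f.1⟩

theorem ext {f g : BoundedMeasurable α} (hfg : ∀ x, f x = g x) : f = g :=
  Subtype.ext <| lp.ext <| funext hfg

theorem measurable (f : BoundedMeasurable α) : Measurable f := f.2

theorem abs_apply_le (f : BoundedMeasurable α) (x : α) : |f x| ≤ ‖f‖ :=
  lp.norm_apply_le_norm ENNReal.top_ne_zero f.1 x

theorem norm_le {f : BoundedMeasurable α} {C : ℝ} (hC : 0 ≤ C) (hf : ∀ x, |f x| ≤ C) : ‖f‖ ≤ C :=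
  lp.norm_le_of_forall_le (f := f.1) hC hf

/-- A bounded measurable function as an element of `BoundedMeasurable`. -/
def mk (f : α → ℝ) (hm : Measurable f) (hb : ∃ C, ∀ x, |f x| ≤ C) : BoundedMeasurable α :=
  ⟨⟨f, memℓp_infty (hb.imp fun _ hC => forall_mem_range.2 hC)⟩, hm⟩

/-- Evaluation at a point as a continuous linear functional. -/
noncomputable def eval (x : α) : BoundedMeasurable α →L[ℝ] ℝ :=
  (lp.evalCLM ℝ (fun _ : α => ℝ) ∞ x).comp (boundedMeasurableSubmodule α).subtypeL

@[simp]
theorem eval_apply (x : α) (f : BoundedMeasurable α) : eval x f = f x := rfl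

theorem measurable_IccExtend {a b : ℝ} (hab : a ≤ b) (f : BoundedMeasurable (Icc a b)) :
    Measurable (IccExtend hab f) :=
  f.measurable.comp continuous_projIcc.measurable

theorem locBdd_IccExtend {a b : ℝ} (hab : a ≤ b) (f : BoundedMeasurable (Icc a b)) :
    LocBdd (IccExtend hab f) :=
  fun _ => ⟨‖f‖, fun _ _ => f.abs_apply_le _⟩

end BoundedMeasurable

section TruncatedPsi

variable {X : ℝ} (hX : 0 ≤ X)

theorem abs_Psi_IccExtend_le (μ : Measure ℝ) [IsFiniteMeasure μ] (f : BoundedMeasurable (Icc 0 X))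
    (x : Icc 0 X) : |Psi μ (IccExtend hX f) x| ≤ (1 + μ.real univ) * X * ‖f‖ := by
  have hx : |Psi μ (IccExtend hX f) x| ≤ (1 + μ.real univ) * ‖f‖ * x := by
    simpa using abs_Psi_le_of_abs_le_pow (μ := μ) (n := 0) x.2.1 (norm_nonneg f)
      fun w _ => by rw [pow_zero, mul_one]; exact f.abs_apply_le _
  refine hx.trans ?_
  rw [mul_right_comm]
  gcongr
  exact x.2.2

/-- The compounding operator on bounded measurable functions on `[0, X]`; a function on `[0, X]`
is extended to `ℝ` by its boundary values, which `Psi` does not see. -/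
noncomputable def truncatedPsi (μ : Measure ℝ) [IsFiniteMeasure μ] :
    BoundedMeasurable (Icc 0 X) →L[ℝ] BoundedMeasurable (Icc 0 X) :=
  LinearMap.mkContinuous
    { toFun f := .mk (fun x => Psi μ (IccExtend hX f) x)
        ((measurable_Psi (f.measurable_IccExtend hX)).comp measurable_subtype_coe)
        ⟨_, abs_Psi_IccExtend_le hX μ f⟩
      map_add' f g := BoundedMeasurable.ext fun x =>
        Psi_add (f.measurable_IccExtend hX) (f.locBdd_IccExtend hX)
          (g.measurable_IccExtend hX) (g.locBdd_IccExtend hX) x.2.1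
      map_smul' c f := BoundedMeasurable.ext fun x => Psi_smul c x.1 }
    ((1 + μ.real univ) * X) fun f =>
      BoundedMeasurable.norm_le (by positivity) (abs_Psi_IccExtend_le hX μ f)

theorem truncatedPsi_apply (μ : Measure ℝ) [IsFiniteMeasure μ] (f : BoundedMeasurable (Icc 0 X))
    (x : Icc 0 X) : truncatedPsi hX μ f x = Psi μ (IccExtend hX f) x := rfl

variable {ι : Type*} [Fintype ι] (μ : ι → Measure ℝ) [∀ j, IsFiniteMeasure (μ j)]

/-- The operator `⟨γ,Ψ⟩` on bounded measurable functions on `[0, X]`, as a linear function of the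
weight vector `γ`. -/
noncomputable def truncatedWeightedPsi :
    (ι → ℝ) →L[ℝ] BoundedMeasurable (Icc 0 X) →L[ℝ] BoundedMeasurable (Icc 0 X) :=
  (Fintype.linearCombination ℝ fun j => truncatedPsi hX (μ j)).toContinuousLinearMap

variable {μ} (γ : ι → ℝ) {f : BoundedMeasurable (Icc 0 X)} {h : ℝ → ℝ}

theorem truncatedWeightedPsi_apply_apply (f : BoundedMeasurable (Icc 0 X)) (x : Icc 0 X) :
    truncatedWeightedPsi hX μ γ f x = weightedPsi μ γ (IccExtend hX f) x := by
  rw [← BoundedMeasurable.eval_apply]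
  simp [truncatedWeightedPsi, Fintype.linearCombination_apply, truncatedPsi_apply, weightedPsi]

theorem weightedPsi_eq_truncatedWeightedPsi (hf : ∀ x : Icc 0 X, h x = f x) (x : Icc 0 X) :
    weightedPsi μ γ h x = truncatedWeightedPsi hX μ γ f x := by
  rw [truncatedWeightedPsi_apply_apply]
  exact weightedPsi_congr (fun w hw => (hf ⟨w, hw⟩).trans (IccExtend_of_mem hX f hw).symm) x.2

theorem iterate_weightedPsi_eq_pow_truncatedWeightedPsi (hf : ∀ x : Icc 0 X, h x = f x) (n : ℕ)
    (x : Icc 0 X) : (weightedPsi μ γ)^[n] h x = (truncatedWeightedPsi hX μ γ ^ n) f x := by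
  induction n generalizing x with
  | zero => exact hf x
  | succ n ih =>
    rw [Function.iterate_succ_apply', pow_succ', mul_apply_eq_comp]
    exact weightedPsi_eq_truncatedWeightedPsi hX γ ih x

theorem norm_pow_truncatedWeightedPsi_le (n : ℕ) :
    ‖truncatedWeightedPsi hX μ γ ^ n‖ ≤ (volterraRate μ γ * X) ^ n / n ! := by
  have hr := volterraRate_nonneg (μ := μ) (γ := γ)
  refine ContinuousLinearMap.opNorm_le_bound _ (by positivity) fun f =>
    BoundedMeasurable.norm_le (by positivity) fun x => ?_
  rw [← iterate_weightedPsi_eq_pow_truncatedWeightedPsi hX γ (h := IccExtend hX f)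
    (IccExtend_val hX f)]
  calc |(weightedPsi μ γ)^[n] (IccExtend hX f) x|
      ≤ ‖f‖ * volterraRate μ γ ^ n / n ! * x ^ n :=
        abs_iterate_weightedPsi_le (norm_nonneg f) (fun w _ => f.abs_apply_le _) n x x.2
    _ ≤ ‖f‖ * volterraRate μ γ ^ n / n ! * X ^ n := by
      gcongr
      exacts [x.2.1, x.2.2]
    _ = (volterraRate μ γ * X) ^ n / n ! * ‖f‖ := by ring

theorem summable_pow_truncatedWeightedPsi : Summable (truncatedWeightedPsi hX μ γ ^ ·) :=
  .of_norm_bounded (Real.summable_pow_div_factorial _) (norm_pow_truncatedWeightedPsi_le hX γ)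

theorem hasSum_iterate_weightedPsi (hf : ∀ x : Icc 0 X, h x = f x) (x : Icc 0 X) :
    HasSum (fun n : ℕ => (weightedPsi μ γ)^[n] h x)
      (Ring.inverse (1 - truncatedWeightedPsi hX μ γ) f x) := by
  have hT := summable_pow_truncatedWeightedPsi (μ := μ) hX γ
  rw [ringInverse_one_sub_eq_tsum_pow hT]
  simp_rw [iterate_weightedPsi_eq_pow_truncatedWeightedPsi hX γ hf]
  exact ((BoundedMeasurable.eval x).comp (ContinuousLinearMap.apply ℝ _ f)).hasSum hT.hasSum

theorem weightedSol_eq_ringInverse (hf : ∀ x : Icc 0 X, h x = f x) (x : Icc 0 X) :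
    weightedSol μ γ h x = Ring.inverse (1 - truncatedWeightedPsi hX μ γ) f x :=
  (hasSum_iterate_weightedPsi hX γ hf x).tsum_eq

end TruncatedPsi

theorem multi_risk_solution_differentiable_general {ι : Type*} [Fintype ι] (μ : ι → Measure ℝ)
    [∀ j, IsFiniteMeasure (μ j)] {g : ℝ → ℝ} (hg : Measurable g) (hgb : LocBdd g)
    {x : ℝ} (hx : 0 ≤ x) (γ : ι → ℝ) :
    Summable (fun n : ℕ => ((weightedPsi μ γ)^[n] g) x) ∧
      AnalyticAt ℝ (fun γ' => weightedSol μ γ' g x) γ ∧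
      ∀ v, fderiv ℝ (fun γ' => weightedSol μ γ' g x) γ v =
        weightedSol μ γ (weightedPsi μ v (weightedSol μ γ g)) x := by
  let x' : Icc 0 x := ⟨x, hx, le_rfl⟩
  obtain ⟨M, hM⟩ := hgb x
  let f : BoundedMeasurable (Icc 0 x) :=
    .mk (fun z => g z) (hg.comp measurable_subtype_coe) ⟨M, fun z => hM z z.2⟩
  let evalAt := (BoundedMeasurable.eval x').comp (ContinuousLinearMap.apply ℝ _ f)
  have hf (z : Icc 0 x) : g z = f z := rfl
  have hu : (fun γ' => weightedSol μ γ' g x) =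
      fun γ' => evalAt (Ring.inverse (1 - truncatedWeightedPsi hx μ γ')) :=
    funext fun γ' => weightedSol_eq_ringInverse hx γ' hf x'
  have hunit := isUnit_one_sub_of_summable_pow (summable_pow_truncatedWeightedPsi (μ := μ) hx γ)
  have hR := analyticAt_ringInverse_one_sub hunit
  refine ⟨(hasSum_iterate_weightedPsi hx γ hf x').summable, ?_, fun v => ?_⟩
  · rw [hu]
    exact (evalAt.analyticAt _).fun_comp hR
  · have hΨu := weightedPsi_eq_truncatedWeightedPsi (μ := μ) hx v
      (weightedSol_eq_ringInverse (μ := μ) hx γ hf)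
    have hchain := (evalAt.hasFDerivAt.comp γ hR.differentiableAt.hasFDerivAt).fderiv
    calc fderiv ℝ (fun γ' => weightedSol μ γ' g x) γ v
        = evalAt (fderiv ℝ (fun γ' => Ring.inverse (1 - truncatedWeightedPsi hx μ γ')) γ v) := by
          rw [hu]
          exact DFunLike.congr_fun hchain v
      _ = weightedSol μ γ (weightedPsi μ v (weightedSol μ γ g)) x := by
          rw [fderiv_ringInverse_one_sub_apply hunit]
          exact (weightedSol_eq_ringInverse hx γ hΨu x').symm

/-- differentiability of the multi-risk solution in the weight vector: for
each `x ≥ 0` the series `Σ_n (⟨γ,Ψ⟩ⁿ g)(x)` converges, `γ ↦ u_{γ,g}(x)` is differentiable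
(indeed analytic) on `ℝ⁵`, and `∂u_{γ,g}(x)/∂γⱼ = u_{γ, Ψⱼ u_{γ,g}}(x)` for each `j`. -/
theorem multi_risk_solution_differentiable
    (μ : Fin 5 → Measure ℝ) [∀ j, IsProbabilityMeasure (μ j)]
    (hμ0 : ∀ j, μ j (Iic 0) = 0)
    (g : ℝ → ℝ) (hg : Measurable g) (hgb : LocBdd g) :
    ∀ x ≥ (0:ℝ), ∀ γ : Fin 5 → ℝ,
      Summable (fun n : ℕ => ((PsiVec μ γ)^[n] g) x) ∧
      DifferentiableAt ℝ (fun γ' : Fin 5 → ℝ => uSol μ γ' g x) γ ∧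
      AnalyticAt ℝ (fun γ' : Fin 5 → ℝ => uSol μ γ' g x) γ ∧
      ∀ j : Fin 5, fderiv ℝ (fun γ' : Fin 5 → ℝ => uSol μ γ' g x) γ (Pi.single j 1) =
        uSol μ γ (Psi (μ j) (uSol μ γ g)) x := by
  intro x hx γ
  obtain ⟨hsum, hana, hderiv⟩ := multi_risk_solution_differentiable_general μ hg hgb hx γ
  exact ⟨hsum, hana.differentiableAt, hana,
    fun j => (hderiv _).trans (by rw [weightedPsi_single]; rfl)⟩
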